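/- The polynomial r(x) = x⁸ − 2x⁷ − x⁶ + 4x⁵ − 3x³ + x + 1 is irreducible over ℚ. Let K = ℚ[x]/(r(x)), let t be the image of x in K, and let 𝓞_K be the ring of integers of K. Then the principal ideal (t³ − t − 1) of 𝓞_K is a prime ideal of absolute norm 7, and the ideal (7) = 7𝓞_K factors as a product 𝒫₁𝒫₂𝒫₃ of three prime ideals of absolute norms 7, 7³ and 7⁴ respectively, with 𝒫₁ = (t³ − t − 1). -/

import Mathlib

open Polynomial

/-- The polynomial `r(x) = x⁸ − 2x⁷ − x⁶ + 4x⁵ − 3x³ + x + 1` over `ℚ`. -/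
noncomputable def rK : ℚ[X] :=
  X ^ 8 - 2 * X ^ 7 - X ^ 6 + 4 * X ^ 5 - 3 * X ^ 3 + X + 1

/-!
Modulo `7` the polynomial `r` is a product of distinct monic irreducibles of degrees `1, 3, 4` with
constant terms `2, 5, 5`. A monic integral factor of `r` has constant term `±1` and reduces to a
subproduct of these; no proper nonempty subproduct has constant term `±1`, so `r` is irreducible.

The derivative `r'(t)` lies in the conductor of `ℤ[t]` and, `r` being separable modulo `7`, is
coprime to `7`. Hence the Kummer–Dedekind theorem applies at `7` and reads off the primes
`(7, gᵢ(t))` above `7` from the factors `gᵢ`. The one of degree `1` is `(7, t + 2)`, which equals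
`(t³ - t - 1)`: the element `t³ - t - 1` is congruent to a multiple of `t + 2` modulo `7`, and
divides both `7` and `t + 2` in `ℤ[t]`.
-/

section Irreducibility

theorem exists_finset_eq_prod_of_monic_dvd_prod {F ι : Type*} [Field F] {s : Finset ι}
    {g : ι → F[X]} (hmonic : ∀ i ∈ s, (g i).Monic) (hirr : ∀ i ∈ s, Irreducible (g i)) {q : F[X]}
    (hq : q.Monic) (hdvd : q ∣ ∏ i ∈ s, g i) : ∃ t ⊆ s, q = ∏ i ∈ t, g i := by
  classical
  obtain ⟨y, hy⟩ := hdvd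
  obtain ⟨t, u, b, c, rfl, -, hbc, hqt, -⟩ :=
    mul_eq_mul_prime_prod (x := q) (y := y) (a := 1) (fun i hi ↦ (hirr i hi).prime)
      (by rw [one_mul, hy])
  have ht : t ⊆ t ∪ u := Finset.subset_union_left
  refine ⟨t, ht, eq_of_monic_of_associated hq
    (monic_prod_of_monic t g fun i hi ↦ hmonic i (ht hi)) ?_⟩
  rw [hqt]
  exact associated_unit_mul_left _ b (.of_mul_eq_one _ hbc.symm)

theorem irreducible_of_map_eq_prod_of_isUnit_coeff_zero {R F ι : Type*} [CommRing R]
    [IsDomain R] [Field F] [Fintype ι] [Nonempty ι] (φ : R →+* F) {f : R[X]} (hf : f.Monic)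
    (hf₀ : IsUnit (f.coeff 0)) {g : ι → F[X]} (hmonic : ∀ i, (g i).Monic)
    (hirr : ∀ i, Irreducible (g i)) (hfg : f.map φ = ∏ i, g i)
    (hg₀ : ∀ (s : Finset ι) (u : Rˣ), ∏ i ∈ s, (g i).coeff 0 = φ u → s = ∅ ∨ s = Finset.univ) :
    Irreducible f := by
  refine (irreducible_of_monic hf ?_).mpr fun q q' hq hq' hqq' ↦ ?_
  · rintro rfl
    obtain ⟨i⟩ := ‹Nonempty ι›
    rw [Polynomial.map_one] at hfg
    exact (hirr i).not_isUnit
      (isUnit_of_dvd_one (hfg ▸ Finset.dvd_prod_of_mem g (Finset.mem_univ i)))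
  have hmul : q.map φ * q'.map φ = ∏ i, g i := by rw [← hfg, ← hqq', Polynomial.map_mul]
  obtain ⟨u, hu⟩ : IsUnit (q.coeff 0) :=
    isUnit_of_dvd_unit ⟨q'.coeff 0, by rw [← hqq', mul_coeff_zero]⟩ hf₀
  obtain ⟨s, -, hs⟩ := exists_finset_eq_prod_of_monic_dvd_prod (fun i _ ↦ hmonic i)
    (fun i _ ↦ hirr i) (hq.map φ) ⟨_, hmul.symm⟩
  obtain rfl | rfl := hg₀ s u (by rw [← coeff_zero_prod, ← hs, coeff_map, hu])
  · exact .inl (hq.eq_one_of_map_eq_one φ hs)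
  · exact .inr (hq'.eq_one_of_map_eq_one φ <|
      mul_left_cancel₀ (hq.map φ).ne_zero (by rw [hmul, ← hs, mul_one]))

theorem irreducible_monic_cubic {R : Type*} [CommRing R] [IsDomain R] {a b c : R}
    (hroot : ∀ x, x ^ 3 + a * x ^ 2 + b * x + c ≠ 0) :
    Irreducible (X ^ 3 + C a * X ^ 2 + C b * X + C c) := by
  have hdeg : IsMonicOfDegree (X ^ 3 + C a * X ^ 2 + C b * X + C c) 3 :=
    ⟨by compute_degree!, by monicity!⟩
  rw [hdeg.monic.irreducible_iff_roots_eq_zero_of_degree_le_three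
    (by rw [hdeg.natDegree_eq]; norm_num) hdeg.natDegree_eq.le]
  refine Multiset.eq_zero_of_forall_notMem fun x hx ↦ hroot x ?_
  simpa using (mem_roots'.mp hx).2

theorem irreducible_monic_quartic {R : Type*} [CommRing R] [IsDomain R] {a b c d : R}
    (hroot : ∀ x, x ^ 4 + a * x ^ 3 + b * x ^ 2 + c * x + d ≠ 0)
    (hquad : ∀ u v w z, u + w = a → v + u * w + z = b → u * z + v * w = c → v * z ≠ d) :
    Irreducible (X ^ 4 + C a * X ^ 3 + C b * X ^ 2 + C c * X + C d) := by
  have hdeg : IsMonicOfDegree (X ^ 4 + C a * X ^ 3 + C b * X ^ 2 + C c * X + C d) 4 :=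
    ⟨by compute_degree!, by monicity!⟩
  rw [hdeg.monic.irreducible_iff_lt_natDegree_lt
    (fun h ↦ by simpa [h] using hdeg.natDegree_eq), hdeg.natDegree_eq]
  rintro q hq hqdeg ⟨q', hqq'⟩
  rw [Finset.mem_Ioc] at hqdeg
  obtain hq₁ | hq₂ : q.natDegree = 1 ∨ q.natDegree = 2 := by omega
  · obtain ⟨x, rfl⟩ := isMonicOfDegree_one_iff.mp ⟨hq₁, hq⟩
    have heval := congrArg (eval (-x)) hqq'
    simp only [eval_add, eval_mul, eval_pow, eval_X, eval_C, neg_add_cancel, zero_mul] at heval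
    exact hroot _ heval
  · have hq'₂ : IsMonicOfDegree q' 2 :=
      IsMonicOfDegree.of_mul_left (m := 2) ⟨hq₂, hq⟩ (hqq' ▸ hdeg)
    obtain ⟨u, v, rfl⟩ := isMonicOfDegree_two_iff.mp ⟨hq₂, hq⟩
    obtain ⟨w, z, rfl⟩ := isMonicOfDegree_two_iff.mp hq'₂
    have hexpand : (X ^ 2 + C u * X + C v) * (X ^ 2 + C w * X + C z) =
        X ^ 4 + C (u + w) * X ^ 3 + C (v + u * w + z) * X ^ 2 + C (u * z + v * w) * X +
          C (v * z) := by
      simp only [C_add, C_mul]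
      ring
    have hcoeff (n : ℕ) := congrArg (coeff · n) (hexpand.symm.trans hqq'.symm)
    refine hquad u v w z ?_ ?_ ?_ ?_
    · simpa [coeff_X, coeff_C, -map_add, -map_mul] using hcoeff 3
    · simpa [coeff_X, coeff_C, -map_add, -map_mul] using hcoeff 2
    · simpa [coeff_X, coeff_C, -map_add, -map_mul] using hcoeff 1
    · simpa [coeff_X, coeff_C, -map_add, -map_mul] using hcoeff 0

theorem minpoly_eq_of_monic_of_irreducible {R S : Type*} [CommRing R] [IsDomain R]
    [IsIntegrallyClosed R] [CommRing S] [IsDomain S] [Algebra R S] [Module.IsTorsionFree R S]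
    {s : S} {f : R[X]} (hf : f.Monic) (hirr : Irreducible f) (hs : aeval s f = 0) :
    minpoly R s = f := by
  have hint : IsIntegral R s := ⟨f, hf, hs⟩
  exact eq_of_monic_of_associated (minpoly.monic hint) hf <|
    (minpoly.prime_of_isIntegrallyClosed hint).irreducible.associated_of_dvd hirr
      (minpoly.isIntegrallyClosed_dvd hint hs)

end Irreducibility

section Reduction

variable {S : Type*} [CommRing S] {n : ℕ}

theorem natCast_dvd_aeval_sub_aeval_of_map_eq (x : S) {f g : ℤ[X]}
    (h : f.map (Int.castRingHom (ZMod n)) = g.map (Int.castRingHom (ZMod n))) :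
    (n : S) ∣ aeval x f - aeval x g := by
  have hdvd : C (n : ℤ) ∣ f - g := by
    rw [C_dvd_iff_dvd_coeff]
    intro k
    rw [← ZMod.intCast_zmod_eq_zero_iff_dvd, ← eq_intCast (Int.castRingHom (ZMod n)), ← coeff_map,
      Polynomial.map_sub, h, sub_self, coeff_zero]
  simpa using map_dvd (aeval x) hdvd

theorem isCoprime_span_pair_of_isCoprime_map (x : S) {f g : ℤ[X]}
    (h : IsCoprime (f.map (Int.castRingHom (ZMod n))) (g.map (Int.castRingHom (ZMod n)))) :
    IsCoprime (Ideal.span {(n : S), aeval x f}) (Ideal.span {(n : S), aeval x g}) := by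
  have hsurj := map_surjective _ (ZMod.ringHom_surjective (Int.castRingHom (ZMod n)))
  obtain ⟨u', v', huv⟩ := h
  obtain ⟨u, rfl⟩ := hsurj u'
  obtain ⟨v, rfl⟩ := hsurj v'
  obtain ⟨k, hk⟩ : (n : S) ∣ aeval x (u * f + v * g) - aeval x 1 :=
    natCast_dvd_aeval_sub_aeval_of_map_eq x (by simpa using huv)
  simp only [map_add, map_mul, map_one] at hk
  rw [Ideal.isCoprime_iff_exists]
  exact ⟨-k * n + aeval x u * aeval x f, Ideal.mem_span_pair.mpr ⟨_, _, rfl⟩,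
    0 * n + aeval x v * aeval x g, Ideal.mem_span_pair.mpr ⟨_, _, rfl⟩, by linear_combination hk⟩

theorem map_mk_span_singleton_span_pair (a b : S) :
    (Ideal.span {a, b}).map (Ideal.Quotient.mk (Ideal.span {a})) =
      Ideal.span {Ideal.Quotient.mk (Ideal.span {a}) b} := by
  rw [Ideal.map_span, Set.image_pair, Ideal.Quotient.mk_singleton_self, Ideal.span_insert_zero]

theorem span_natCast_eq_prod_span_pair {ι : Type*} [Fintype ι] {x : S} {f : ℤ[X]} {g : ι → ℤ[X]}
    (hf : aeval x f = 0)
    (hfg : f.map (Int.castRingHom (ZMod n)) = ∏ i, (g i).map (Int.castRingHom (ZMod n)))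
    (hg : Pairwise (Function.onFun IsCoprime fun i ↦ (g i).map (Int.castRingHom (ZMod n)))) :
    Ideal.span {(n : S)} = ∏ i, Ideal.span {(n : S), aeval x (g i)} := by
  apply le_antisymm
  · rw [Ideal.prod_eq_iInf_of_pairwise_isCoprime
      fun i _ j _ hij ↦ isCoprime_span_pair_of_isCoprime_map x (hg hij)]
    exact le_iInf₂ fun i _ ↦ Ideal.span_mono (by simp)
  · have hdvd : (n : S) ∣ ∏ i, aeval x (g i) := by
      simpa only [hf, map_prod, sub_zero] using natCast_dvd_aeval_sub_aeval_of_map_eq x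
        (hfg.trans (Polynomial.map_prod _ _ _).symm).symm
    rw [← Ideal.mk_ker (I := Ideal.span {(n : S)}), ← Ideal.map_eq_bot_iff_le_ker,
      ← Ideal.mapHom_apply, map_prod]
    simp only [Ideal.mapHom_apply, map_mk_span_singleton_span_pair, Ideal.prod_span_singleton]
    rwa [← map_prod, Ideal.span_singleton_eq_bot, Ideal.Quotient.eq_zero_iff_mem,
      Ideal.mem_span_singleton]

theorem pairwise_isCoprime_of_monic_irreducible {F ι : Type*} [Field F] {g : ι → F[X]}
    (hmonic : ∀ i, (g i).Monic) (hirr : ∀ i, Irreducible (g i)) (hinj : Function.Injective g) :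
    Pairwise (Function.onFun IsCoprime g) := fun i j hij ↦
  ((hirr i).isCoprime_or_dvd _).resolve_right fun h ↦ hij <| hinj <|
    eq_of_monic_of_associated (hmonic i) (hmonic j) ((hirr i).associated_of_dvd (hirr j) h)

theorem separable_prod_of_monic_irreducible {F ι : Type*} [Field F] [PerfectField F] [Fintype ι]
    {g : ι → F[X]} (hmonic : ∀ i, (g i).Monic) (hirr : ∀ i, Irreducible (g i))
    (hinj : Function.Injective g) : (∏ i, g i).Separable :=
  separable_prod (pairwise_isCoprime_of_monic_irreducible hmonic hirr hinj)
    fun i ↦ PerfectField.separable_of_irreducible (hirr i)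

theorem not_comap_le_of_isCoprime_map {R : Type*} [CommRing R] [Algebra R S]
    [Algebra.IsIntegral R S] {P : Ideal R} [P.IsPrime] {I : Ideal S}
    (h : IsCoprime (P.map (algebraMap R S)) I) : ¬ I.comap (algebraMap R S) ≤ P := by
  intro hle
  obtain ⟨Q, hIQ, hQ, hQP⟩ := Ideal.exists_ideal_over_prime_of_isIntegral P I hle
  apply hQ.ne_top
  rw [eq_top_iff, ← Ideal.isCoprime_iff_sup_eq.mp h]
  exact sup_le (Ideal.map_le_iff_le_comap.mpr hQP.ge) hIQ

end Reduction

section NumberField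

open NumberField RingOfIntegers

variable {K : Type*} [Field K] {θ : 𝓞 K} {p : ℕ} [Fact p.Prime]

theorem mem_monicFactorsMod_iff {q : (ZMod p)[X]} :
    q ∈ monicFactorsMod θ p ↔
      Irreducible q ∧ q.Monic ∧ q ∣ (minpoly ℤ θ).map (Int.castRingHom (ZMod p)) := by
  rw [Multiset.mem_toFinset,
    Polynomial.mem_normalizedFactors_iff (map_monic_ne_zero (minpoly.monic θ.isIntegral))]

variable [NumberField K]

theorem not_dvd_exponent_of_separable
    (hθ : Algebra.adjoin ℚ {algebraMap (𝓞 K) K θ} = ⊤)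
    (hsep : ((minpoly ℤ θ).map (Int.castRingHom (ZMod p))).Separable) : ¬ p ∣ exponent θ := by
  have hmem : aeval θ (derivative (minpoly ℤ θ)) ∈ conductor ℤ θ := by
    rw [← Ideal.span_singleton_le_iff_mem, ← conductor_mul_differentIdeal ℤ ℚ K θ hθ]
    exact Ideal.mul_le_left
  have hcop : IsCoprime (Ideal.span {(p : 𝓞 K), aeval θ (minpoly ℤ θ)})
      (Ideal.span {(p : 𝓞 K), aeval θ (derivative (minpoly ℤ θ))}) :=
    isCoprime_span_pair_of_isCoprime_map θ (by rw [← derivative_map]; exact hsep)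
  have hmax : (Ideal.span {(p : ℤ)}).IsMaximal := Int.ideal_span_isMaximal_of_prime p
  rw [not_dvd_exponent_iff, codisjoint_comm, ← hmax.out.not_le_iff_codisjoint]
  refine not_comap_le_of_isCoprime_map ?_
  rw [Ideal.map_span, Set.image_singleton, map_natCast]
  rw [Ideal.isCoprime_iff_sup_eq] at hcop ⊢
  rw [eq_top_iff, ← hcop, minpoly.aeval]
  refine sup_le (Ideal.span_le.mpr ?_) (Ideal.span_le.mpr ?_)
  · simp [Set.pair_subset_iff, Submodule.mem_sup_left]
  · exact Set.pair_subset (Ideal.mem_sup_left (Ideal.mem_span_singleton_self _))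
      (Ideal.mem_sup_right hmem)

theorem isPrime_span_pair_and_absNorm_eq_of_mem_monicFactorsMod (hp : ¬ p ∣ exponent θ) {g : ℤ[X]}
    (hg : g.map (Int.castRingHom (ZMod p)) ∈ monicFactorsMod θ p) :
    (Ideal.span {(p : 𝓞 K), aeval θ g}).IsPrime ∧
      Ideal.absNorm (Ideal.span {(p : 𝓞 K), aeval θ g}) =
        p ^ (g.map (Int.castRingHom (ZMod p))).natDegree := by
  have hspan := NumberField.Ideal.primesOverSpanEquivMonicFactorsMod_symm_apply_eq_span hp hg
  have hprime : (Ideal.span {(p : 𝓞 K), aeval θ g}).IsPrime :=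
    hspan ▸ ((NumberField.Ideal.primesOverSpanEquivMonicFactorsMod hp).symm _).2.1
  have := NumberField.Ideal.liesOver_primesOverSpanEquivMonicFactorsMod_symm hp hg
  refine ⟨hprime, ?_⟩
  rw [← Ideal.pow_inertiaDeg p, ← hspan,
    NumberField.Ideal.inertiaDeg_primesOverSpanEquivMonicFactorsMod_symm_apply hp hg]

theorem isPrime_span_pair_and_absNorm_eq_of_minpoly_map_eq_prod {ι : Type*} [Fintype ι]
    {g : ι → ℤ[X]} (hθ : Algebra.adjoin ℚ {algebraMap (𝓞 K) K θ} = ⊤)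
    (hmonic : ∀ i, ((g i).map (Int.castRingHom (ZMod p))).Monic)
    (hirr : ∀ i, Irreducible ((g i).map (Int.castRingHom (ZMod p))))
    (hinj : Function.Injective fun i ↦ (g i).map (Int.castRingHom (ZMod p)))
    (hfg : (minpoly ℤ θ).map (Int.castRingHom (ZMod p)) =
      ∏ i, (g i).map (Int.castRingHom (ZMod p))) (i : ι) :
    (Ideal.span {(p : 𝓞 K), aeval θ (g i)}).IsPrime ∧
      Ideal.absNorm (Ideal.span {(p : 𝓞 K), aeval θ (g i)}) =
        p ^ ((g i).map (Int.castRingHom (ZMod p))).natDegree := by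
  have hexp : ¬ p ∣ exponent θ := not_dvd_exponent_of_separable hθ <|
    hfg ▸ separable_prod_of_monic_irreducible hmonic hirr hinj
  exact isPrime_span_pair_and_absNorm_eq_of_mem_monicFactorsMod hexp <|
    mem_monicFactorsMod_iff.mpr
      ⟨hirr i, hmonic i, hfg ▸ Finset.dvd_prod_of_mem _ (Finset.mem_univ i)⟩

end NumberField

section Octic

/-- The polynomial `rK` with coefficients in `ℤ`. -/
noncomputable def rZ : ℤ[X] :=
  X ^ 8 - 2 * X ^ 7 - X ^ 6 + 4 * X ^ 5 - 3 * X ^ 3 + X + 1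

theorem rZ_monic : rZ.Monic := by
  unfold rZ; monicity!

theorem rZ_map_algebraMap : rZ.map (algebraMap ℤ ℚ) = rK := by
  simp [rZ, rK]

/-- Lifts to `ℤ[X]` of the monic irreducible factors of `r` modulo `7`. -/
noncomputable def rFactor : Fin 3 → ℤ[X] :=
  ![X + 2, X ^ 3 + 4 * X ^ 2 + 5 * X + 5, X ^ 4 + 6 * X ^ 3 + 6 * X ^ 2 + X + 5]

local instance fact_prime_seven : Fact (Nat.Prime 7) := ⟨by norm_num⟩

theorem rFactor_monic (i : Fin 3) : (rFactor i).Monic := by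
  fin_cases i
  · change (X + 2 : ℤ[X]).Monic
    monicity!
  · change (X ^ 3 + 4 * X ^ 2 + 5 * X + 5 : ℤ[X]).Monic
    monicity!
  · change (X ^ 4 + 6 * X ^ 3 + 6 * X ^ 2 + X + 5 : ℤ[X]).Monic
    monicity!

theorem rFactor_natDegree (i : Fin 3) : (rFactor i).natDegree = ![1, 3, 4] i := by
  fin_cases i
  · change (X + 2 : ℤ[X]).natDegree = 1
    compute_degree!
  · change (X ^ 3 + 4 * X ^ 2 + 5 * X + 5 : ℤ[X]).natDegree = 3
    compute_degree!
  · change (X ^ 4 + 6 * X ^ 3 + 6 * X ^ 2 + X + 5 : ℤ[X]).natDegree = 4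
    compute_degree!

theorem rFactor_coeff_zero (i : Fin 3) : (rFactor i).coeff 0 = ![2, 5, 5] i := by
  fin_cases i <;> simp [rFactor]

theorem rFactor_map (i : Fin 3) : (rFactor i).map (Int.castRingHom (ZMod 7)) =
    ![X + C 2, X ^ 3 + C 4 * X ^ 2 + C 5 * X + C 5,
      X ^ 4 + C 6 * X ^ 3 + C 6 * X ^ 2 + C 1 * X + C 5] i := by
  fin_cases i <;> simp [rFactor] <;> rfl

theorem rFactor_map_irreducible (i : Fin 3) :
    Irreducible ((rFactor i).map (Int.castRingHom (ZMod 7))) := by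
  rw [rFactor_map]
  fin_cases i
  · exact (monic_X_add_C 2).irreducible_of_degree_eq_one (degree_X_add_C 2)
  · exact irreducible_monic_cubic (by decide)
  · have hquad : ∀ u v : ZMod 7,
        u * (6 - v - u * (6 - u)) + v * (6 - u) = 1 → v * (6 - v - u * (6 - u)) ≠ 5 := by decide
    refine irreducible_monic_quartic (by decide) fun u v w z hw hz ↦ ?_
    obtain rfl : w = 6 - u := by linear_combination hw
    obtain rfl : z = 6 - v - u * (6 - u) := by linear_combination hz
    exact hquad u v

theorem rZ_map_zmod :
    rZ.map (Int.castRingHom (ZMod 7)) = ∏ i, (rFactor i).map (Int.castRingHom (ZMod 7)) := by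
  have h7 : (7 : (ZMod 7)[X]) = 0 := CharP.ofNat_eq_zero _ 7
  simp only [rZ, rFactor, Fin.prod_univ_three, Matrix.cons_val, Polynomial.map_add,
    Polynomial.map_sub, Polynomial.map_mul, Polynomial.map_pow, map_X, Polynomial.map_one,
    Polynomial.map_ofNat]
  -- The cofactor of `7` is `(rZ - ∏ i, rFactor i) / 7`.
  linear_combination (-7 - 12 * X - 20 * X ^ 2 - 28 * X ^ 3 - 27 * X ^ 4 - 18 * X ^ 5 -
    8 * X ^ 6 - 2 * X ^ 7) * h7

theorem rZ_irreducible : Irreducible rZ := by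
  have hconst : ∀ s : Finset (Fin 3), ∏ i ∈ s, ((![2, 5, 5] i : ℤ) : ZMod 7) = 1 ∨
      ∏ i ∈ s, ((![2, 5, 5] i : ℤ) : ZMod 7) = -1 → s = ∅ ∨ s = Finset.univ := by decide
  refine irreducible_of_map_eq_prod_of_isUnit_coeff_zero (Int.castRingHom (ZMod 7))
    rZ_monic (by simp [rZ]) (fun i ↦ (rFactor_monic i).map _) rFactor_map_irreducible rZ_map_zmod
    fun s u h ↦ hconst s ?_
  simp only [coeff_map, rFactor_coeff_zero, eq_intCast] at h
  rw [h]
  obtain rfl | rfl := Int.units_eq_one_or u <;> simp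

theorem rK_irreducible : Irreducible rK := by
  rw [← rZ_map_algebraMap, ← rZ_monic.irreducible_iff_irreducible_map_fraction_map]
  exact rZ_irreducible

theorem rFactor_map_injective :
    Function.Injective fun i ↦ (rFactor i).map (Int.castRingHom (ZMod 7)) := by
  intro i j hij
  have hdeg := congrArg natDegree hij
  simp only [(rFactor_monic _).natDegree_map, rFactor_natDegree] at hdeg
  exact (by decide : Function.Injective ![1, 3, 4]) hdeg

/-- The ideal `(7, gᵢ(t))` for the `i`-th factor `gᵢ` of `r` modulo `7`. When `t` generates a number
field and is a root of `r`, these are the primes of its ring of integers above `7`. -/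
noncomputable def idealOverSeven {S : Type*} [CommRing S] (t : S) (i : Fin 3) : Ideal S :=
  Ideal.span {7, aeval t (rFactor i)}

variable {S : Type*} [CommRing S] {t : S}

theorem aeval_rZ (t : S) :
    aeval t rZ = t ^ 8 - 2 * t ^ 7 - t ^ 6 + 4 * t ^ 5 - 3 * t ^ 3 + t + 1 := by
  simp only [rZ, map_add, map_sub, map_mul, map_pow, map_one, map_ofNat, aeval_X]

theorem idealOverSeven_zero (ht : aeval t rZ = 0) :
    idealOverSeven t 0 = Ideal.span {t ^ 3 - t - 1} := by
  rw [aeval_rZ] at ht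
  have hgen : idealOverSeven t 0 = Ideal.span {7, t + 2} := by
    simp only [idealOverSeven, rFactor, Matrix.cons_val_zero, map_add, aeval_X, map_ofNat]
  rw [hgen]
  apply le_antisymm
  · rw [Ideal.span_le, Set.pair_subset_iff]
    simp only [SetLike.mem_coe, Ideal.mem_span_singleton]
    -- The cofactors are `7 / (t ^ 3 - t - 1)` and `(t + 2) / (t ^ 3 - t - 1)` in `ℚ[x]/(r)`.
    constructor
    · use t ^ 7 - 4 * t ^ 6 + 11 * t ^ 4 - 8 * t ^ 3 - 8 * t ^ 2 + 9 * t - 3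
      linear_combination -(t ^ 2 - 2 * t - 4) * ht
    · use -1 + 2 * t - t ^ 2 - 3 * t ^ 3 + 2 * t ^ 4 + t ^ 5 - t ^ 6
      linear_combination (1 + t) * ht
  · rw [Ideal.span_singleton_le_iff_mem, Ideal.mem_span_pair]
    exact ⟨-1, t ^ 2 - 2 * t + 3, by ring⟩

theorem span_seven_eq_prod_idealOverSeven (ht : aeval t rZ = 0) :
    Ideal.span {7} = ∏ i, idealOverSeven t i :=
  span_natCast_eq_prod_span_pair (n := 7) ht rZ_map_zmod <|
    pairwise_isCoprime_of_monic_irreducible (fun i ↦ (rFactor_monic i).map _)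
      rFactor_map_irreducible rFactor_map_injective

open NumberField in
theorem isPrime_idealOverSeven_and_absNorm_eq {K : Type*} [Field K] [NumberField K] {t : 𝓞 K}
    (ht : aeval t rZ = 0) (hgen : Algebra.adjoin ℚ {algebraMap (𝓞 K) K t} = ⊤) (i : Fin 3) :
    (idealOverSeven t i).IsPrime ∧ Ideal.absNorm (idealOverSeven t i) = 7 ^ ![1, 3, 4] i := by
  rw [← rFactor_natDegree, ← (rFactor_monic i).natDegree_map (Int.castRingHom (ZMod 7))]
  refine isPrime_span_pair_and_absNorm_eq_of_minpoly_map_eq_prod (p := 7) hgen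
    (fun i ↦ (rFactor_monic i).map _) rFactor_map_irreducible rFactor_map_injective ?_ i
  rw [minpoly_eq_of_monic_of_irreducible rZ_monic rZ_irreducible ht, rZ_map_zmod]

theorem aeval_rZ_eq_zero_of_aeval_algebraMap_rK {K : Type*} [Field K] [Algebra ℚ K]
    [Algebra S K] [FaithfulSMul S K] (ht : aeval (algebraMap S K t) rK = 0) :
    aeval t rZ = 0 := by
  apply FaithfulSMul.algebraMap_injective S K
  rw [← aeval_algebraMap_apply, map_zero, ← ht, ← rZ_map_algebraMap, aeval_map_algebraMap]

end Octic

/-- `r(x)` is irreducible over `ℚ`; and if `K = ℚ[x]/(r(x))` (i.e. any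
number field generated over `ℚ` by a root `t` of `r`, with `t` in the ring of
integers `𝓞_K`), then `(t³ − t − 1)` is a prime ideal of `𝓞_K` of absolute norm `7`,
and `(7) = 𝒫₁𝒫₂𝒫₃` with the `𝒫ᵢ` prime of absolute norms `7, 7³, 7⁴` respectively,
and `𝒫₁ = (t³ − t − 1)`. -/
theorem stmt_15 :
    Irreducible rK ∧
    ∀ (K : Type) [Field K] [NumberField K] (t : NumberField.RingOfIntegers K),
      aeval (algebraMap (NumberField.RingOfIntegers K) K t) rK = 0 →
      Algebra.adjoin ℚ {algebraMap (NumberField.RingOfIntegers K) K t} = ⊤ →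
      ((Ideal.span {t ^ 3 - t - 1}).IsPrime ∧
        Ideal.absNorm (Ideal.span {t ^ 3 - t - 1}) = 7 ∧
        ∃ P₂ P₃ : Ideal (NumberField.RingOfIntegers K),
          P₂.IsPrime ∧ P₃.IsPrime ∧
          Ideal.absNorm P₂ = 7 ^ 3 ∧ Ideal.absNorm P₃ = 7 ^ 4 ∧
          Ideal.span {(7 : NumberField.RingOfIntegers K)} =
            Ideal.span {t ^ 3 - t - 1} * P₂ * P₃) := by
  refine ⟨rK_irreducible, fun K _ _ t ht hgen ↦ ?_⟩
  have hrt := aeval_rZ_eq_zero_of_aeval_algebraMap_rK ht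
  have hP := isPrime_idealOverSeven_and_absNorm_eq hrt hgen
  rw [span_seven_eq_prod_idealOverSeven hrt, ← idealOverSeven_zero hrt, Fin.prod_univ_three]
  exact ⟨(hP 0).1, (hP 0).2, _, _, (hP 1).1, (hP 2).1, (hP 1).2, (hP 2).2, rfl⟩
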